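/- Let r, n, m ≥ 1 and let μ, ν be partitions of r. Then the number of single-column lexicographic bitableaux T ∈ B_{(1^r)}(n,m) with a(T) = μ, b(T) = ν, and such that both w(T) and u'(T) are Yamanouchi, equals 1 if μ is the conjugate partition ν' of ν (with ℓ(μ) ≤ n and ℓ(ν) ≤ m) and 0 otherwise. -/

import Mathlib

/-- Lexicographic (weak) order on pairs: `(a,b) ≤ (a',b')` iff `a < a'`, or `a = a'` and `b ≤ b'`. -/
def lexLe (p q : ℕ × ℕ) : Prop := p.1 < q.1 ∨ (p.1 = q.1 ∧ p.2 ≤ q.2)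

/-- Lexicographic strict order on pairs. -/
def lexLt (p q : ℕ × ℕ) : Prop := p.1 < q.1 ∨ (p.1 = q.1 ∧ p.2 < q.2)

instance : DecidableRel lexLe := fun p q =>
  inferInstanceAs (Decidable (p.1 < q.1 ∨ (p.1 = q.1 ∧ p.2 ≤ q.2)))

instance : DecidableRel lexLt := fun p q =>
  inferInstanceAs (Decidable (p.1 < q.1 ∨ (p.1 = q.1 ∧ p.2 < q.2)))

/-- Row-insert the value `v` into the tableau `P` (a list of rows): `v` is appended at the end
of the first row if it is at least as large as every entry there; otherwise it replaces the
leftmost entry strictly larger than `v`, which is then inserted into the next row. -/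
def insRow (v : ℕ) : List (List ℕ) → List (List ℕ)
  | [] => [[v]]
  | r :: rest =>
    match r.findIdx? (fun x => decide (v < x)) with
    | none => (r ++ [v]) :: rest
    | some idx => (r.set idx v) :: insRow (r.getD idx 0) rest

/-- The insertion tableau `P(w)` of a word: successively row-insert the letters of `w`,
starting from the empty tableau. -/
def Pword (w : List ℕ) : List (List ℕ) :=
  w.foldl (fun t v => insRow v t) []

/-- The index of the row in which `p'` (the result of a row insertion into `p`) has one more
box than `p`. -/
def growIdx (p p' : List (List ℕ)) : ℕ :=
  (List.range p'.length).findIdx fun r => decide ((p.getD r []).length ≠ (p'.getD r []).length)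

/-- Append the value `a` at the end of row `r` of the tableau `q`. -/
def addBox (q : List (List ℕ)) (r a : ℕ) : List (List ℕ) :=
  if r < q.length then q.set r (q.getD r [] ++ [a]) else q ++ [[a]]

/-- The RSK correspondence applied to a biword, given as a list of (top, bottom) pairs:
the bottom entries are row-inserted in order to form the insertion tableau `P`, and the top
entries are recorded in the newly created boxes to form the recording tableau `Q`. -/
def rsk (w : List (ℕ × ℕ)) : List (List ℕ) × List (List ℕ) :=
  w.foldl (fun PQ ab =>
    let P' := insRow ab.2 PQ.1
    (P', addBox PQ.2 (growIdx PQ.1 P') ab.1)) ([], [])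

/-- A word is Yamanouchi if for every `i ≥ 1`, every suffix contains at least as many letters
`i` as letters `i+1`. -/
def Yamanouchi (w : List ℕ) : Prop :=
  ∀ i : ℕ, 1 ≤ i → ∀ s ∈ w.tails, s.count (i + 1) ≤ s.count i

/-- A one-row lexicographic bitableau in `B_{(r)}(n,m)`, encoded as its list of entries read
left to right: pairs in `{1,…,n} × {1,…,m}`, weakly increasing in lexicographic order. -/
def IsRowBitab (n m r : ℕ) (L : List (ℕ × ℕ)) : Prop :=
  L.length = r ∧ (∀ p ∈ L, (1 ≤ p.1 ∧ p.1 ≤ n) ∧ (1 ≤ p.2 ∧ p.2 ≤ m)) ∧ L.Chain' lexLe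

/-- The sort-by-top reading word `w(T)` of a one-row bitableau: for `k = 1, …, n` in increasing
order, the second coordinates of the boxes with first coordinate `k`, read left to right. -/
def wRow (n : ℕ) (L : List (ℕ × ℕ)) : List ℕ :=
  (List.range n).flatMap fun k => (L.filter fun p => decide (p.1 = k + 1)).map Prod.snd

/-- The reading word `u(T)` of a one-row bitableau: for `k = 1, …, m` in increasing order,
the first coordinates of the boxes with second coordinate `k`, read left to right. -/
def uRow (m : ℕ) (L : List (ℕ × ℕ)) : List ℕ :=
  (List.range m).flatMap fun k => (L.filter fun p => decide (p.2 = k + 1)).map Prod.fst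

/-- A single-column lexicographic bitableau in `B_{(1^r)}(n,m)`, encoded as its list of entries
read top to bottom: pairs in `{1,…,n} × {1,…,m}`, strictly increasing in lexicographic order. -/
def IsColBitab (n m r : ℕ) (L : List (ℕ × ℕ)) : Prop :=
  L.length = r ∧ (∀ p ∈ L, (1 ≤ p.1 ∧ p.1 ≤ n) ∧ (1 ≤ p.2 ∧ p.2 ≤ m)) ∧ L.Chain' lexLt

/-- The sort-by-top reading word `w(T)` of a single-column bitableau: for `k = 1, …, n` in
increasing order, the second coordinates of the boxes with first coordinate `k`, each group
read from the bottom of the column to the top. -/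
def wCol (n : ℕ) (L : List (ℕ × ℕ)) : List ℕ :=
  (List.range n).flatMap fun k => ((L.filter fun p => decide (p.1 = k + 1)).reverse).map Prod.snd

/-- The reading word `u'(T)` of a single-column bitableau: for `k = m, m−1, …, 1` in
decreasing order, the first coordinates of the boxes with second coordinate `k`, each group
read from the bottom of the column to the top. -/
def uCol' (m : ℕ) (L : List (ℕ × ℕ)) : List ℕ :=
  ((List.range m).reverse).flatMap fun k =>
    ((L.filter fun p => decide (p.2 = k + 1)).reverse).map Prod.fst

/-- The Burge word of a single-column bitableau: list the boxes grouped by first coordinate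
`k = 1, …, n` in increasing order, within each group from the bottom of the column to the
top (so second coordinates strictly decrease within each group). -/
def burge (n : ℕ) (L : List (ℕ × ℕ)) : List (ℕ × ℕ) :=
  (List.range n).flatMap fun k => (L.filter fun p => decide (p.1 = k + 1)).reverse

/-- The transpose of a tableau given as a list of rows: column `c` becomes row `c`. -/
def transposeT (q : List (List ℕ)) : List (List ℕ) :=
  (List.range (q.getD 0 []).length).map fun c => q.filterMap fun row => row[c]?

/-- The Burge insertion correspondence `bRSK` on a single-column bitableau: row-insert the
second coordinates of the Burge word in order to form `P`, record the first coordinates to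
form the (row-strict) recording tableau `Q`, and output `(P, Qᵗ)`. -/
def bRSK (n : ℕ) (L : List (ℕ × ℕ)) : List (List ℕ) × List (List ℕ) :=
  ((rsk (burge n L)).1, transposeT (rsk (burge n L)).2)

open scoped Classical

/-- The `i`-th part (1-indexed) of a partition, `0` if `i` exceeds the number of parts. -/
def partAt {r : ℕ} (μ : Nat.Partition r) (i : ℕ) : ℕ :=
  (μ.parts.sort (· ≥ ·)).getD (i - 1) 0

/-- `μ` is the conjugate partition `ν'` of `ν`: for every `i ≥ 1`, the `i`-th part of `μ` is
the number of parts of `ν` that are at least `i`. -/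
def IsConjPart {r : ℕ} (μ ν : Nat.Partition r) : Prop :=
  ∀ i : ℕ, 1 ≤ i → partAt μ i = (ν.parts.filter fun y => i ≤ y).card

/-- The list of entries of a single-column bitableau encoded by `v : Fin r → Fin n × Fin m`
(the box `t`, counted from the top, has entry `((v t).1 + 1, (v t).2 + 1)`). -/
def colList {n m r : ℕ} (v : Fin r → Fin n × Fin m) : List (ℕ × ℕ) :=
  (List.ofFn v).map fun p => (((p.1 : ℕ) + 1, (p.2 : ℕ) + 1))

/-!
Replace the column by its set of 0-indexed boxes `D ⊆ [0, n) × [0, m)`. Both reading words are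
concatenations of strictly decreasing blocks, so the Yamanouchi condition need only be tested on
suffixes made of whole blocks, where it compares truncated columns (for `w`) or truncated rows
(for `u'`) of `D`. Together these comparisons say exactly that `D` is the set of cells of a Young
diagram. The weights of the tableau are then the row and column lengths of that diagram, so it is
the diagram of `μ` and its transpose is the diagram of `ν`; and a set of boxes is listed in strictly
increasing lexicographic order in exactly one way.
-/

section Lists

variable {α β : Type*}

theorem perm_flatMap_filter_reverse [DecidableEq β] (f : α → β) (L : List α) {t : List β}
    (ht : t.Nodup) :
    (t.flatMap fun b => (L.filter fun a => decide (f a = b)).reverse).Perm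
      (L.filter fun a => decide (f a ∈ t)) := by
  induction t with
  | nil => simp
  | cons b t ih =>
    obtain ⟨hb, ht⟩ := List.nodup_cons.1 ht
    rw [List.flatMap_cons]
    refine ((List.reverse_perm _).append (ih ht)).trans ?_
    have split := List.filter_append_perm (fun a => decide (f a = b))
      (L.filter fun a => decide (f a ∈ b :: t))
    simp only [List.filter_filter] at split
    refine (List.Perm.of_eq ?_).trans split
    congr 1 <;> refine List.filter_congr fun a _ => ?_ <;> by_cases h : f a = b <;> simp [h, hb]

theorem count_flatMap_map_filter_reverse {γ : Type*} [DecidableEq β] [DecidableEq γ]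
    (f : α → β) (g : α → γ) (L : List α) {t : List β} (ht : t.Nodup) (x : γ) :
    (t.flatMap fun b => (L.filter fun a => decide (f a = b)).reverse.map g).count x =
      L.countP fun a => decide (f a ∈ t ∧ g a = x) := by
  rw [← List.map_flatMap, ((perm_flatMap_filter_reverse f L ht).map g).count_eq, List.count,
    List.countP_map, List.countP_filter]
  exact List.countP_congr fun a _ => by simp [and_comm]

theorem mem_drop_range {n k x : ℕ} : x ∈ (List.range n).drop k ↔ k ≤ x ∧ x < n := by
  rw [List.range_eq_range', List.drop_range', List.mem_range'_1]
  omega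

theorem mem_drop_reverse_range {n k x : ℕ} : x ∈ (List.range n).reverse.drop k ↔ x < n - k := by
  rw [List.drop_reverse, List.mem_reverse, List.length_range, List.take_range, List.mem_range]
  omega

end Lists

section YamanouchiWords

theorem yamanouchi_iff_suffix {w : List ℕ} :
    Yamanouchi w ↔ ∀ s, s <:+ w → ∀ i, s.count (i + 2) ≤ s.count (i + 1) := by
  simp only [Yamanouchi, List.mem_tails]
  constructor
  · exact fun h s hs i => h (i + 1) (by omega) s hs
  · intro h i hi s hs
    obtain ⟨i, rfl⟩ := Nat.exists_eq_add_of_le' hi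
    exact h s hs i

theorem yamanouchi_append_iff {g w : List ℕ} (hg : g.Pairwise (· > ·)) :
    Yamanouchi (g ++ w) ↔
      (∀ i, (g ++ w).count (i + 2) ≤ (g ++ w).count (i + 1)) ∧ Yamanouchi w := by
  simp only [yamanouchi_iff_suffix]
  constructor
  · exact fun h => ⟨h _ List.suffix_rfl, fun s hs => h s (hs.trans (List.suffix_append g w))⟩
  rintro ⟨htotal, hw⟩ s hs i
  obtain ⟨p, hp⟩ := hs
  rcases List.append_eq_append_iff.1 hp with ⟨t, rfl, rfl⟩ | ⟨t, -, rfl⟩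
  swap
  · exact hw s (List.suffix_append t s) i
  have hw_le := hw w List.suffix_rfl i
  have htotal_le := htotal i
  simp only [List.count_append] at htotal_le ⊢
  -- Either `t` has no letter `i + 2`, or all letters `i + 1` of the decreasing block `p ++ t`
  -- come after it, so that `p` has none.
  by_cases hmem : i + 2 ∈ t
  · have hp : p.count (i + 1) = 0 := List.count_eq_zero.2 fun hip => by
      have := (List.pairwise_append.1 hg).2.2 _ hip _ hmem
      omega
    omega
  · have := List.count_eq_zero.2 hmem
    omega

theorem yamanouchi_flatMap_iff {α : Type*} {g : α → List ℕ} (hg : ∀ a, (g a).Pairwise (· > ·))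
    (l : List α) :
    Yamanouchi (l.flatMap g) ↔
      ∀ k i, ((l.drop k).flatMap g).count (i + 2) ≤ ((l.drop k).flatMap g).count (i + 1) := by
  induction l with
  | nil => simp [yamanouchi_iff_suffix]
  | cons a l ih =>
    rw [List.flatMap_cons, yamanouchi_append_iff (hg a), ih,
      ← Nat.and_forall_add_one (p := fun k => ∀ i, (((a :: l).drop k).flatMap g).count (i + 2) ≤
        (((a :: l).drop k).flatMap g).count (i + 1))]
    rfl

end YamanouchiWords

section LowerSets

open scoped Finset

variable {D : Finset (ℕ × ℕ)}

theorem card_col_le_of_isLowerSet (hD : IsLowerSet (D : Set (ℕ × ℕ))) (k j : ℕ) :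
    #{c ∈ D | k ≤ c.1 ∧ c.2 = j + 1} ≤ #{c ∈ D | k ≤ c.1 ∧ c.2 = j} := by
  refine Finset.card_le_card_of_injOn (fun c => (c.1, c.2 - 1)) ?_ ?_
  · rintro ⟨a, b⟩ hc
    simp only [Finset.mem_coe, Finset.mem_filter] at hc ⊢
    exact ⟨hD (Prod.mk_le_mk.2 ⟨le_rfl, Nat.sub_le b 1⟩) hc.1, hc.2.1, by omega⟩
  · rintro ⟨a, b⟩ hc ⟨a', b'⟩ hc' h
    simp only [Finset.mem_coe, Finset.mem_filter, Prod.mk.injEq] at hc hc' h ⊢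
    omega

theorem card_row_le_of_isLowerSet (hD : IsLowerSet (D : Set (ℕ × ℕ))) (k i : ℕ) :
    #{c ∈ D | c.1 = i + 1 ∧ c.2 < k} ≤ #{c ∈ D | c.1 = i ∧ c.2 < k} := by
  refine Finset.card_le_card_of_injOn (fun c => (c.1 - 1, c.2)) ?_ ?_
  · rintro ⟨a, b⟩ hc
    simp only [Finset.mem_coe, Finset.mem_filter] at hc ⊢
    exact ⟨hD (Prod.mk_le_mk.2 ⟨Nat.sub_le a 1, le_rfl⟩) hc.1, by omega, hc.2.2⟩
  · rintro ⟨a, b⟩ hc ⟨a', b'⟩ hc' h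
    simp only [Finset.mem_coe, Finset.mem_filter, Prod.mk.injEq] at hc hc' h ⊢
    omega

theorem mem_of_card_row_le {i j : ℕ}
    (hrow : #{c ∈ D | c.1 = i + 1 ∧ c.2 < j + 1} ≤ #{c ∈ D | c.1 = i ∧ c.2 < j + 1})
    (hfull : ∀ b ≤ j, (i + 1, b) ∈ D) : (i, j) ∈ D := by
  have hupper : {i + 1} ×ˢ Finset.range (j + 1) ⊆ {c ∈ D | c.1 = i + 1 ∧ c.2 < j + 1} := by
    rintro ⟨a, b⟩ hc
    obtain ⟨ha, hb⟩ := Finset.mem_product.1 hc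
    obtain rfl := Finset.mem_singleton.1 ha
    have hb := Finset.mem_range.1 hb
    exact Finset.mem_filter.2 ⟨hfull b (by omega), rfl, hb⟩
  have hlower : {c ∈ D | c.1 = i ∧ c.2 < j + 1} ⊆ {i} ×ˢ Finset.range (j + 1) := by
    intro c hc
    obtain ⟨-, hi, hj⟩ := Finset.mem_filter.1 hc
    exact Finset.mem_product.2 ⟨Finset.mem_singleton.2 hi, Finset.mem_range.2 hj⟩
  have hcard : #({i} ×ˢ Finset.range (j + 1)) ≤ #{c ∈ D | c.1 = i ∧ c.2 < j + 1} := by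
    refine le_trans ?_ ((Finset.card_le_card hupper).trans hrow)
    simp
  have hmem : (i, j) ∈ {c ∈ D | c.1 = i ∧ c.2 < j + 1} := by
    rw [Finset.eq_of_subset_of_card_le hlower hcard]
    simp
  exact (Finset.mem_filter.1 hmem).1

theorem exists_mem_col_of_card_col_le {i j : ℕ}
    (hcol : #{c ∈ D | i ≤ c.1 ∧ c.2 = j + 1} ≤ #{c ∈ D | i ≤ c.1 ∧ c.2 = j})
    (hmem : (i, j + 1) ∈ D) : ∃ a ≥ i, (a, j) ∈ D := by
  have hpos : 0 < #{c ∈ D | i ≤ c.1 ∧ c.2 = j + 1} :=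
    Finset.card_pos.2 ⟨(i, j + 1), by simp [hmem]⟩
  obtain ⟨⟨a, b⟩, hc⟩ := Finset.card_pos.1 (hpos.trans_le hcol)
  obtain ⟨hD, ha, rfl⟩ := Finset.mem_filter.1 hc
  exact ⟨a, ha, hD⟩

theorem isLowerSet_iff_mem_of_succ_mem :
    IsLowerSet (D : Set (ℕ × ℕ)) ↔
      (∀ i j, (i, j + 1) ∈ D → (i, j) ∈ D) ∧ (∀ i j, (i + 1, j) ∈ D → (i, j) ∈ D) := by
  constructor
  · exact fun h => ⟨fun i j => h (Prod.mk_le_mk.2 ⟨le_rfl, Nat.le_succ j⟩),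
      fun i j => h (Prod.mk_le_mk.2 ⟨Nat.le_succ i, le_rfl⟩)⟩
  · rintro ⟨hleft, hup⟩ ⟨a, b⟩ ⟨i, j⟩ hle hmem
    have hcol : (i, b) ∈ D :=
      Nat.decreasingInduction' (P := fun x => (x, b) ∈ D) (fun x _ _ => hup x b) hle.1 hmem
    exact Nat.decreasingInduction' (P := fun y => (i, y) ∈ D) (fun y _ _ => hleft i y) hle.2 hcol

theorem isLowerSet_iff_card_le :
    IsLowerSet (D : Set (ℕ × ℕ)) ↔
      (∀ k j, #{c ∈ D | k ≤ c.1 ∧ c.2 = j + 1} ≤ #{c ∈ D | k ≤ c.1 ∧ c.2 = j}) ∧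
      (∀ k i, #{c ∈ D | c.1 = i + 1 ∧ c.2 < k} ≤ #{c ∈ D | c.1 = i ∧ c.2 < k}) := by
  refine ⟨fun h => ⟨card_col_le_of_isLowerSet h, card_row_le_of_isLowerSet h⟩, ?_⟩
  rintro ⟨hcol, hrow⟩
  rw [isLowerSet_iff_mem_of_succ_mem, ← forall_and]
  obtain ⟨N, hN⟩ : ∃ N, ∀ c ∈ D, c.1 < N :=
    ⟨D.sup Prod.fst + 1, fun c hc => Nat.lt_succ_of_le (Finset.le_sup (f := Prod.fst) hc)⟩
  -- Downward induction on the row: row `i + 1` is left-justified, so `hrow` puts each of its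
  -- cells under a cell of row `i`; then a gap in row `i` would leave its column empty below,
  -- although the next column is not, contradicting `hcol`.
  suffices ∀ d i, N ≤ i + d →
      (∀ j, (i, j + 1) ∈ D → (i, j) ∈ D) ∧ (∀ j, (i + 1, j) ∈ D → (i, j) ∈ D) from
    fun i => this N i (by omega)
  intro d
  induction d with
  | zero =>
    intro i hi
    exact ⟨fun j hj => absurd (hN _ hj) (by simpa using hi),
      fun j hj => absurd (hN _ hj) (by simp only at hi ⊢; omega)⟩
  | succ d ih =>
    intro i hi
    have hup : ∀ j, (i + 1, j) ∈ D → (i, j) ∈ D := fun j hj =>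
      mem_of_card_row_le (hrow (j + 1) i) fun b hb =>
        Nat.decreasingInduction' (fun y _ _ => (ih (i + 1) (by omega)).1 y) hb hj
    refine ⟨fun j hj => ?_, hup⟩
    obtain ⟨a, ha, hmem⟩ := exists_mem_col_of_card_col_le (hcol i j) hj
    refine Nat.decreasingInduction' (P := fun x => (x, j) ∈ D) (fun x _ hx => ?_) ha hmem
    rcases hx.eq_or_lt with rfl | hlt
    · exact hup j
    · exact (ih x (by omega)).2 j

end LowerSets

section YoungDiagrams

open scoped Finset

variable {Y Z : YoungDiagram}

theorem colLen_eq_countP_rowLens (Y : YoungDiagram) (j : ℕ) :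
    Y.colLen j = Y.rowLens.countP (j < ·) := by
  have hmem : ∀ i, j < Y.rowLen i ↔ i < Y.colLen j := fun i => by
    rw [← YoungDiagram.mem_iff_lt_rowLen, YoungDiagram.mem_iff_lt_colLen]
  have hfilter : {i ∈ Finset.range (Y.colLen 0) | j < Y.rowLen i} = Finset.range (Y.colLen j) := by
    have := Y.colLen_anti 0 j (Nat.zero_le j)
    ext i
    simp only [hmem, Finset.mem_filter, Finset.mem_range]
    omega
  rw [← Finset.card_range (Y.colLen j), ← hfilter, ← List.toFinset_range,
    List.nodup_range.card_eq_countP, YoungDiagram.rowLens, List.countP_map]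
  rfl

theorem sum_rowLens (Y : YoungDiagram) : Y.rowLens.sum = Y.card := by
  have hrow : ∀ c ∈ Y.cells, c.1 ∈ Finset.range (Y.colLen 0) := fun c hc =>
    Finset.mem_range.2
      (YoungDiagram.mem_iff_lt_colLen.1 (Y.up_left_mem le_rfl (Nat.zero_le c.2) hc))
  calc Y.rowLens.sum = ∑ i ∈ Finset.range (Y.colLen 0), Y.rowLen i := rfl
    _ = ∑ i ∈ Finset.range (Y.colLen 0), (Y.row i).card := by simp only [Y.rowLen_eq_card]
    _ = Y.card := (Finset.card_eq_sum_card_fiberwise hrow).symm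

theorem getD_rowLens (Y : YoungDiagram) (i : ℕ) : Y.rowLens.getD i 0 = Y.rowLen i := by
  by_cases hi : i < Y.rowLens.length
  · rw [List.getD_eq_getElem _ _ hi, YoungDiagram.get_rowLens]
  · rw [List.getD_eq_default _ _ (not_lt.1 hi), eq_comm, ← Nat.le_zero, ← not_lt]
    rwa [← YoungDiagram.mem_iff_lt_rowLen, YoungDiagram.mem_iff_lt_colLen,
      ← YoungDiagram.length_rowLens]

theorem youngDiagram_card_transpose (Y : YoungDiagram) : Y.transpose.card = Y.card :=
  Finset.card_map _

theorem youngDiagram_ext_rowLen (h : ∀ i, Y.rowLen i = Z.rowLen i) : Y = Z :=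
  SetLike.ext fun ⟨i, j⟩ => by
    rw [YoungDiagram.mem_iff_lt_rowLen, YoungDiagram.mem_iff_lt_rowLen, h]

theorem eq_of_rowLen_le_of_card_le (hrow : ∀ c ∈ Y, Y.rowLen c.1 ≤ Z.rowLen c.1)
    (hcard : Z.card ≤ Y.card) : Y = Z := by
  refine YoungDiagram.ext (Finset.eq_of_subset_of_card_le (fun c hc => ?_) hcard)
  exact YoungDiagram.mem_iff_lt_rowLen.2
    ((YoungDiagram.mem_iff_lt_rowLen.1 hc).trans_le (hrow c hc))

theorem cells_subset_range_product_iff {n m : ℕ} :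
    Y.cells ⊆ Finset.range n ×ˢ Finset.range m ↔ Y.colLen 0 ≤ n ∧ Y.rowLen 0 ≤ m := by
  constructor
  · intro h
    refine ⟨le_of_not_gt fun hn => ?_, le_of_not_gt fun hm => ?_⟩
    · simpa using h ((YoungDiagram.mem_cells _).2 (YoungDiagram.mem_iff_lt_colLen.2 hn))
    · simpa using h ((YoungDiagram.mem_cells _).2 (YoungDiagram.mem_iff_lt_rowLen.2 hm))
  · rintro ⟨hn, hm⟩ ⟨i, j⟩ hc
    have hi := YoungDiagram.mem_iff_lt_colLen.1 (Y.up_left_mem le_rfl (Nat.zero_le j) hc)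
    have hj := YoungDiagram.mem_iff_lt_rowLen.1 (Y.up_left_mem (Nat.zero_le i) le_rfl hc)
    exact Finset.mem_product.2
      ⟨Finset.mem_range.2 (hi.trans_le hn), Finset.mem_range.2 (hj.trans_le hm)⟩

theorem eq_cells_and_eq_transpose_iff {n m : ℕ} {D : Finset (ℕ × ℕ)}
    (hD : D ⊆ Finset.range n ×ˢ Finset.range m) (hY : Y.card ≤ #D) (hZ : Z.card ≤ #D) :
    D = Y.cells ∧ Y = Z.transpose ↔
      (∀ i < n, #{c ∈ D | c.1 = i} = Y.rowLen i) ∧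
      (∀ j < m, #{c ∈ D | c.2 = j} = Z.rowLen j) ∧
      IsLowerSet (D : Set (ℕ × ℕ)) := by
  constructor
  · rintro ⟨rfl, rfl⟩
    refine ⟨fun i _ => (YoungDiagram.rowLen_eq_card _).symm, fun j _ => ?_, Z.transpose.isLowerSet⟩
    rw [← YoungDiagram.colLen_transpose, YoungDiagram.colLen_eq_card]
    rfl
  · rintro ⟨hrow, hcol, hlower⟩
    let X : YoungDiagram := ⟨D, hlower⟩
    have hXY : X = Y := by
      refine eq_of_rowLen_le_of_card_le (fun c hc => ?_) hY
      rw [← hrow c.1 (Finset.mem_range.1 (Finset.mem_product.1 (hD hc)).1),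
        YoungDiagram.rowLen_eq_card]
      rfl
    have hXZ : X.transpose = Z := by
      refine eq_of_rowLen_le_of_card_le (fun c hc => ?_)
        (hZ.trans (youngDiagram_card_transpose X).ge)
      have hc := YoungDiagram.mem_transpose.1 hc
      rw [← hcol c.1 (Finset.mem_range.1 (Finset.mem_product.1 (hD hc)).2),
        YoungDiagram.rowLen_transpose, YoungDiagram.colLen_eq_card]
      rfl
    exact ⟨congrArg YoungDiagram.cells hXY, by rw [← hXY, ← hXZ, YoungDiagram.transpose_transpose]⟩

end YoungDiagrams

section PartitionDiagrams

variable {r : ℕ}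

/-- The Young diagram of a partition: its `i`-th row (0-indexed) has `partAt μ (i + 1)` cells. -/
noncomputable def partitionDiagram (μ : Nat.Partition r) : YoungDiagram :=
  YoungDiagram.ofRowLens (μ.parts.sort (· ≥ ·)) (Multiset.pairwise_sort _ _).sortedGE

variable (μ ν : Nat.Partition r)

theorem rowLens_partitionDiagram : (partitionDiagram μ).rowLens = μ.parts.sort (· ≥ ·) :=
  YoungDiagram.rowLens_ofRowLens_eq_self fun _ hx => μ.parts_pos ((Multiset.mem_sort _).1 hx)

theorem rowLen_partitionDiagram (i : ℕ) : (partitionDiagram μ).rowLen i = partAt μ (i + 1) := by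
  rw [← getD_rowLens, rowLens_partitionDiagram, partAt, Nat.add_sub_cancel]

theorem colLen_partitionDiagram (j : ℕ) :
    (partitionDiagram μ).colLen j = (μ.parts.filter fun y => j + 1 ≤ y).card := by
  rw [colLen_eq_countP_rowLens, rowLens_partitionDiagram, ← Multiset.countP_eq_card_filter]
  conv_rhs => rw [← Multiset.sort_eq μ.parts (· ≥ ·)]
  rw [Multiset.coe_countP]
  rfl

theorem colLen_zero_partitionDiagram : (partitionDiagram μ).colLen 0 = μ.parts.card := by
  rw [← YoungDiagram.length_rowLens, rowLens_partitionDiagram, Multiset.length_sort]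

theorem card_partitionDiagram : (partitionDiagram μ).card = r := by
  rw [← sum_rowLens, rowLens_partitionDiagram, ← Multiset.sum_coe, Multiset.sort_eq, μ.parts_sum]

theorem isConjPart_iff_eq_transpose :
    IsConjPart μ ν ↔ partitionDiagram μ = (partitionDiagram ν).transpose := by
  have hlen : ∀ i, partAt μ (i + 1) = (ν.parts.filter fun y => i + 1 ≤ y).card ↔
      (partitionDiagram μ).rowLen i = (partitionDiagram ν).transpose.rowLen i := fun i => by
    rw [rowLen_partitionDiagram, YoungDiagram.rowLen_transpose, colLen_partitionDiagram]
  constructor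
  · exact fun h => youngDiagram_ext_rowLen fun i => (hlen i).1 (h (i + 1) (by omega))
  · intro h i hi
    obtain ⟨i, rfl⟩ := Nat.exists_eq_add_of_le' hi
    exact (hlen i).2 (by rw [h])

variable {μ ν} in
theorem partitionDiagram_subset_range_product_iff {n m : ℕ} (h : IsConjPart μ ν) :
    (partitionDiagram μ).cells ⊆ Finset.range n ×ˢ Finset.range m ↔
      μ.parts.card ≤ n ∧ ν.parts.card ≤ m := by
  rw [cells_subset_range_product_iff, colLen_zero_partitionDiagram,
    (isConjPart_iff_eq_transpose μ ν).1 h, YoungDiagram.rowLen_transpose,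
    colLen_zero_partitionDiagram]

end PartitionDiagrams

section ColumnBitableaux

open scoped Finset

variable {n m r : ℕ}

/-- The 0-indexed embedding of the box `[n] × [m]`, ordered lexicographically, into `ℕ × ℕ`. -/
def boxEmbedding (n m : ℕ) : Fin n ×ₗ Fin m ↪ ℕ × ℕ :=
  ofLex.toEmbedding.trans (Fin.valEmbedding.prodMap Fin.valEmbedding)

/-- The set of entries of a column, as 0-indexed cells: `(i, j)` stands for the entry
`(i + 1, j + 1)`, so that the cells can be compared with those of a Young diagram. -/
def columnCells (v : Fin r → Fin n × Fin m) : Finset (ℕ × ℕ) :=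
  Finset.univ.image fun t => boxEmbedding n m (toLex (v t))

theorem columnCells_subset (v : Fin r → Fin n × Fin m) :
    columnCells v ⊆ Finset.range n ×ˢ Finset.range m := by
  intro c hc
  obtain ⟨t, -, rfl⟩ := Finset.mem_image.1 hc
  simp [boxEmbedding]

theorem pairwise_lexLt_iff_isChain {L : List (ℕ × ℕ)} : L.Pairwise lexLt ↔ L.IsChain lexLt := by
  have : IsTrans (ℕ × ℕ) lexLt := ⟨fun a b c => by unfold lexLt; omega⟩
  exact List.isChain_iff_pairwise.symm

theorem isColBitab_iff_strictMono (v : Fin r → Fin n × Fin m) :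
    IsColBitab n m r (colList v) ↔ StrictMono fun t => toLex (v t) := by
  have hlt : ∀ a b : Fin n × Fin m,
      lexLt ((a.1 : ℕ) + 1, (a.2 : ℕ) + 1) ((b.1 : ℕ) + 1, (b.2 : ℕ) + 1) ↔ toLex a < toLex b := by
    simp [lexLt, Prod.Lex.toLex_lt_toLex, Fin.ext_iff]
  have hbounds : ∀ p ∈ colList v, (1 ≤ p.1 ∧ p.1 ≤ n) ∧ (1 ≤ p.2 ∧ p.2 ≤ m) := by
    intro p hp
    obtain ⟨a, -, rfl⟩ := List.mem_map.1 hp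
    exact ⟨⟨Nat.succ_pos _, a.1.isLt⟩, ⟨Nat.succ_pos _, a.2.isLt⟩⟩
  have hlength : (colList v).length = r := by simp [colList]
  calc IsColBitab n m r (colList v) ↔ (colList v).IsChain lexLt :=
        ⟨fun h => h.2.2, fun h => ⟨hlength, hbounds, h⟩⟩
    _ ↔ StrictMono fun t => toLex (v t) := by
        rw [← pairwise_lexLt_iff_isChain, colList, List.pairwise_map, List.pairwise_ofFn]
        simp only [hlt, StrictMono]

theorem existsUnique_strictMono_image_eq {α : Type*} [LinearOrder α] {s : Finset α}
    (hs : s.card = r) : ∃! f : Fin r → α, StrictMono f ∧ Finset.univ.image f = s := by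
  refine ⟨s.orderEmbOfFin hs, ⟨(s.orderEmbOfFin hs).strictMono, by simp⟩, ?_⟩
  rintro f ⟨hf, himage⟩
  refine Finset.orderEmbOfFin_unique hs (fun t => ?_) hf
  exact himage ▸ Finset.mem_image_of_mem f (Finset.mem_univ t)

theorem existsUnique_isColBitab_columnCells_eq {D : Finset (ℕ × ℕ)}
    (hD : D ⊆ Finset.range n ×ˢ Finset.range m) (hcard : D.card = r) :
    ∃! v : Fin r → Fin n × Fin m, IsColBitab n m r (colList v) ∧ columnCells v = D := by
  obtain ⟨S, -, rfl⟩ : ∃ S ⊆ Finset.univ, D = S.map (boxEmbedding n m) :=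
    Finset.subset_map_iff.1 fun c hc => by
      obtain ⟨hi, hj⟩ := Finset.mem_product.1 (hD hc)
      exact Finset.mem_map.2 ⟨toLex (⟨c.1, Finset.mem_range.1 hi⟩, ⟨c.2, Finset.mem_range.1 hj⟩),
        Finset.mem_univ _, rfl⟩
  have hcells : ∀ v : Fin r → Fin n × Fin m, columnCells v = S.map (boxEmbedding n m) ↔
      Finset.univ.image (fun t => toLex (v t)) = S := fun v => by
    rw [← Finset.map_inj (f := boxEmbedding n m), Finset.map_eq_image _ (Finset.image _ _),
      Finset.image_image]
    rfl
  simp only [isColBitab_iff_strictMono, hcells]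
  exact existsUnique_strictMono_image_eq ((Finset.card_map _).symm.trans hcard)

variable {v : Fin r → Fin n × Fin m}

theorem countP_colList (hv : Function.Injective v) (Q : ℕ × ℕ → Prop) [DecidablePred Q] :
    (colList v).countP (fun p => decide (Q p)) = #{c ∈ columnCells v | Q (c.1 + 1, c.2 + 1)} := by
  have hinj : Function.Injective fun t => boxEmbedding n m (toLex (v t)) :=
    (boxEmbedding n m).injective.comp (toLex.injective.comp hv)
  have hcells : columnCells v = (List.ofFn fun t => boxEmbedding n m (toLex (v t))).toFinset := by
    ext c
    simp [columnCells]
  rw [hcells, (List.nodup_ofFn.2 hinj).card_eq_countP,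
    show (fun t => boxEmbedding n m (toLex (v t))) = (boxEmbedding n m ∘ toLex) ∘ v from rfl,
    ← List.map_ofFn, colList, List.countP_map, List.countP_map]
  rfl

theorem length_filter_fst_colList (hv : Function.Injective v) (i : ℕ) :
    ((colList v).filter fun p => decide (p.1 = i + 1)).length = #{c ∈ columnCells v | c.1 = i} := by
  rw [← List.countP_eq_length_filter, countP_colList hv]
  simp only [Nat.add_right_cancel_iff]

theorem length_filter_snd_colList (hv : Function.Injective v) (j : ℕ) :
    ((colList v).filter fun p => decide (p.2 = j + 1)).length = #{c ∈ columnCells v | c.2 = j} := by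
  rw [← List.countP_eq_length_filter, countP_colList hv]
  simp only [Nat.add_right_cancel_iff]

theorem pairwise_gt_map_snd_reverse_filter {L : List (ℕ × ℕ)} (hL : L.Pairwise lexLt) (k : ℕ) :
    ((L.filter fun p => decide (p.1 = k)).reverse.map Prod.snd).Pairwise (· > ·) := by
  rw [List.pairwise_map, List.pairwise_reverse]
  refine (hL.filter _).imp_of_mem fun {p q} hp hq hlt => ?_
  simp only [List.mem_filter, decide_eq_true_eq] at hp hq
  unfold lexLt at hlt
  omega

theorem pairwise_gt_map_fst_reverse_filter {L : List (ℕ × ℕ)} (hL : L.Pairwise lexLt) (k : ℕ) :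
    ((L.filter fun p => decide (p.2 = k)).reverse.map Prod.fst).Pairwise (· > ·) := by
  rw [List.pairwise_map, List.pairwise_reverse]
  refine (hL.filter _).imp_of_mem fun {p q} hp hq hlt => ?_
  simp only [List.mem_filter, decide_eq_true_eq] at hp hq
  unfold lexLt at hlt
  omega

theorem count_flatMap_map_snd_colList (hv : Function.Injective v) {t : List ℕ} (ht : t.Nodup)
    (j : ℕ) :
    (t.flatMap fun k => ((colList v).filter fun p => decide (p.1 = k + 1)).reverse.map
      Prod.snd).count (j + 1) = #{c ∈ columnCells v | c.1 ∈ t ∧ c.2 = j} := by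
  have h := count_flatMap_map_filter_reverse Prod.fst Prod.snd (colList v)
    (ht.map (add_left_injective 1)) (j + 1)
  rw [List.flatMap_map] at h
  rw [h, countP_colList hv fun p => p.1 ∈ t.map (· + 1) ∧ p.2 = j + 1]
  simp

theorem count_flatMap_map_fst_colList (hv : Function.Injective v) {t : List ℕ} (ht : t.Nodup)
    (i : ℕ) :
    (t.flatMap fun k => ((colList v).filter fun p => decide (p.2 = k + 1)).reverse.map
      Prod.fst).count (i + 1) = #{c ∈ columnCells v | c.1 = i ∧ c.2 ∈ t} := by
  have h := count_flatMap_map_filter_reverse Prod.snd Prod.fst (colList v)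
    (ht.map (add_left_injective 1)) (i + 1)
  rw [List.flatMap_map] at h
  rw [h, countP_colList hv fun p => p.2 ∈ t.map (· + 1) ∧ p.1 = i + 1]
  simp [and_comm]

theorem injective_of_isColBitab (hv : IsColBitab n m r (colList v)) : Function.Injective v :=
  ((isColBitab_iff_strictMono v).1 hv).injective

theorem yamanouchi_wCol_iff (hv : IsColBitab n m r (colList v)) :
    Yamanouchi (wCol n (colList v)) ↔
      ∀ k j, #{c ∈ columnCells v | k ≤ c.1 ∧ c.2 = j + 1} ≤
        #{c ∈ columnCells v | k ≤ c.1 ∧ c.2 = j} := by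
  have hcount : ∀ k j, (((List.range n).drop k).flatMap fun k =>
      ((colList v).filter fun p => decide (p.1 = k + 1)).reverse.map Prod.snd).count (j + 1) =
      #{c ∈ columnCells v | k ≤ c.1 ∧ c.2 = j} := fun k j => by
    rw [count_flatMap_map_snd_colList (injective_of_isColBitab hv)
      (List.nodup_range.sublist (List.drop_sublist k _))]
    refine congrArg Finset.card (Finset.filter_congr fun c hc => ?_)
    have hn := Finset.mem_range.1 (Finset.mem_product.1 (columnCells_subset v hc)).1
    simp only [mem_drop_range, hn, and_true]
  rw [wCol, yamanouchi_flatMap_iff fun k =>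
    pairwise_gt_map_snd_reverse_filter (pairwise_lexLt_iff_isChain.2 hv.2.2) (k + 1)]
  simp only [hcount]

theorem yamanouchi_uCol'_iff (hv : IsColBitab n m r (colList v)) :
    Yamanouchi (uCol' m (colList v)) ↔
      ∀ k i, #{c ∈ columnCells v | c.1 = i + 1 ∧ c.2 < k} ≤
        #{c ∈ columnCells v | c.1 = i ∧ c.2 < k} := by
  have hcount : ∀ k i, (((List.range m).reverse.drop k).flatMap fun k =>
      ((colList v).filter fun p => decide (p.2 = k + 1)).reverse.map Prod.fst).count (i + 1) =
      #{c ∈ columnCells v | c.1 = i ∧ c.2 < m - k} := fun k i => by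
    rw [count_flatMap_map_fst_colList (injective_of_isColBitab hv)
      ((List.nodup_reverse.2 List.nodup_range).sublist (List.drop_sublist k _))]
    simp only [mem_drop_reverse_range]
  have htrunc : ∀ k i, #{c ∈ columnCells v | c.1 = i ∧ c.2 < k} =
      #{c ∈ columnCells v | c.1 = i ∧ c.2 < m - (m - k)} := fun k i => by
    refine congrArg Finset.card (Finset.filter_congr fun c hc => ?_)
    have hm := Finset.mem_range.1 (Finset.mem_product.1 (columnCells_subset v hc)).2
    omega
  rw [uCol', yamanouchi_flatMap_iff fun k =>
    pairwise_gt_map_fst_reverse_filter (pairwise_lexLt_iff_isChain.2 hv.2.2) (k + 1)]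
  simp only [hcount]
  refine ⟨fun h k i => ?_, fun h k => h (m - k)⟩
  rw [htrunc k, htrunc k]
  exact h (m - k) i

theorem yamanouchi_wCol_and_uCol'_iff_isLowerSet (hv : IsColBitab n m r (colList v)) :
    Yamanouchi (wCol n (colList v)) ∧ Yamanouchi (uCol' m (colList v)) ↔
      IsLowerSet (columnCells v : Set (ℕ × ℕ)) := by
  rw [yamanouchi_wCol_iff hv, yamanouchi_uCol'_iff hv, isLowerSet_iff_card_le]

theorem card_columnCells (hv : Function.Injective v) : #(columnCells v) = r := by
  rw [columnCells, Finset.card_image_of_injective, Finset.card_fin]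
  exact (boxEmbedding n m).injective.comp (toLex.injective.comp hv)

theorem fst_weight_eq_partAt_iff (hv : Function.Injective v) (μ : Nat.Partition r) :
    (∀ i ∈ Finset.Icc 1 n, ((colList v).filter fun p => decide (p.1 = i)).length = partAt μ i) ↔
      ∀ i < n, #{c ∈ columnCells v | c.1 = i} = (partitionDiagram μ).rowLen i := by
  simp only [← length_filter_fst_colList hv, rowLen_partitionDiagram]
  constructor
  · exact fun h i hi => h (i + 1) (Finset.mem_Icc.2 ⟨by omega, hi⟩)
  · intro h i hi
    obtain ⟨hi, hin⟩ := Finset.mem_Icc.1 hi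
    obtain ⟨i, rfl⟩ := Nat.exists_eq_add_of_le' hi
    exact h i hin

theorem snd_weight_eq_partAt_iff (hv : Function.Injective v) (ν : Nat.Partition r) :
    (∀ j ∈ Finset.Icc 1 m, ((colList v).filter fun p => decide (p.2 = j)).length = partAt ν j) ↔
      ∀ j < m, #{c ∈ columnCells v | c.2 = j} = (partitionDiagram ν).rowLen j := by
  simp only [← length_filter_snd_colList hv, rowLen_partitionDiagram]
  constructor
  · exact fun h j hj => h (j + 1) (Finset.mem_Icc.2 ⟨by omega, hj⟩)
  · intro h j hj
    obtain ⟨hj, hjm⟩ := Finset.mem_Icc.1 hj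
    obtain ⟨j, rfl⟩ := Nat.exists_eq_add_of_le' hj
    exact h j hjm

theorem weights_eq_and_yamanouchi_iff (hv : IsColBitab n m r (colList v)) (μ ν : Nat.Partition r) :
    (∀ i ∈ Finset.Icc 1 n, ((colList v).filter fun p => decide (p.1 = i)).length = partAt μ i) ∧
      (∀ j ∈ Finset.Icc 1 m, ((colList v).filter fun p => decide (p.2 = j)).length = partAt ν j) ∧
      Yamanouchi (wCol n (colList v)) ∧ Yamanouchi (uCol' m (colList v)) ↔
    columnCells v = (partitionDiagram μ).cells ∧ IsConjPart μ ν := by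
  have hinj := injective_of_isColBitab hv
  have hcard : ∀ κ : Nat.Partition r, (partitionDiagram κ).card ≤ #(columnCells v) := fun κ => by
    rw [card_columnCells hinj, card_partitionDiagram]
  rw [fst_weight_eq_partAt_iff hinj, snd_weight_eq_partAt_iff hinj,
    yamanouchi_wCol_and_uCol'_iff_isLowerSet hv, isConjPart_iff_eq_transpose,
    eq_cells_and_eq_transpose_iff (columnCells_subset v) (hcard μ) (hcard ν)]

theorem card_filter_isColBitab_columnCells_eq {D : Finset (ℕ × ℕ)} (hcard : #D = r) :
    #{v : Fin r → Fin n × Fin m | IsColBitab n m r (colList v) ∧ columnCells v = D} =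
      if D ⊆ Finset.range n ×ˢ Finset.range m then 1 else 0 := by
  split_ifs with hD
  · rw [Finset.card_eq_one, Finset.singleton_iff_unique_mem]
    simpa using existsUnique_isColBitab_columnCells_eq hD hcard
  · refine Finset.card_eq_zero.2 (Finset.filter_eq_empty_iff.2 ?_)
    rintro v - ⟨-, rfl⟩
    exact hD (columnCells_subset v)

end ColumnBitableaux

/-- For partitions `μ, ν ⊢ r`, the number of single-column lexicographic
bitableaux `T ∈ B_{(1^r)}(n,m)` with `a(T) = μ`, `b(T) = ν`, and both `w(T)` and `u'(T)`
Yamanouchi is `1` if `μ` is the conjugate partition `ν'` of `ν` (with `ℓ(μ) ≤ n` and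
`ℓ(ν) ≤ m`), and `0` otherwise. -/
theorem stmt_12 (r n m : ℕ) (hn : 1 ≤ n) (hm : 1 ≤ m) (μ ν : Nat.Partition r) :
    ((Finset.univ : Finset (Fin r → Fin n × Fin m)).filter fun v =>
        IsColBitab n m r (colList v) ∧
        (∀ i ∈ Finset.Icc 1 n, ((colList v).filter fun p => decide (p.1 = i)).length = partAt μ i) ∧
        (∀ j ∈ Finset.Icc 1 m, ((colList v).filter fun p => decide (p.2 = j)).length = partAt ν j) ∧
        Yamanouchi (wCol n (colList v)) ∧ Yamanouchi (uCol' m (colList v))).card =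
      if IsConjPart μ ν ∧ μ.parts.card ≤ n ∧ ν.parts.card ≤ m then 1 else 0 := by
  have hchar : ∀ v : Fin r → Fin n × Fin m, IsColBitab n m r (colList v) ∧ _ ↔
      IsColBitab n m r (colList v) ∧ columnCells v = (partitionDiagram μ).cells ∧ IsConjPart μ ν :=
    fun v => and_congr_right fun hv => weights_eq_and_yamanouchi_iff hv μ ν
  simp only [hchar]
  by_cases hconj : IsConjPart μ ν
  · simp only [hconj, and_true, true_and, ← partitionDiagram_subset_range_product_iff hconj]
    convert card_filter_isColBitab_columnCells_eq (card_partitionDiagram μ)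
  · simp only [hconj, and_false, false_and, Finset.filter_false, Finset.card_empty, if_false]
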